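/- Let H = A_n ≤ G = S_n. Then for every g ∈ S_n and every irreducible complex character χ of S(g) = A_n ∩ g A_n g⁻¹, the indicator ν₂(g,χ) equals 0 or 1. (Equivalently: all simple objects of the group-theoretical fusion category C(S_n, A_n) have Frobenius–Schur indicator 0 or 1.) -/

import Mathlib

open scoped BigOperators Pointwise Classical
open CategoryTheory

/-- For `H ≤ G` and `g ∈ G`, the stabilizer `S(g) = Stab_H(gH) = H ∩ gHg⁻¹`. -/
def stabCoset {G : Type*} [Group G] (H : Subgroup G) (g : G) : Subgroup G :=
  H ⊓ Subgroup.map (MulAut.conj g).toMonoidHom H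

/-- The `m`-th Frobenius–Schur indicator `ν_m(g,χ)` of the simple object of the
group-theoretical fusion category `C(G,H)` attached to `(g,χ)`:
`ν_m(g,χ) = (1/|S(g)|) Σ_{x ∈ H, (gx)^m ∈ H} conj(χ((gx)^m))`
(recall that for `x ∈ H`, `(gx)^m ∈ H` iff `(gx)^m ∈ S(g)`). -/
noncomputable def nuInd {G : Type*} [Group G] (H : Subgroup G) (g : G) (m : ℕ)
    (χ : ↥(stabCoset H g) → ℂ) : ℂ :=
  (Nat.card ↥(stabCoset H g) : ℂ)⁻¹ *
    ∑ᶠ x : G, if h : x ∈ H ∧ (g * x) ^ m ∈ stabCoset H g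
      then (starRingEnd ℂ) (χ ⟨(g * x) ^ m, h.2⟩) else 0

/-- The classical second Frobenius–Schur indicator `ν₂(θ) = (1/|K|) Σ_{x∈K} θ(x²)`. -/
noncomputable def fsInd {K : Type*} [Group K] (θ : K → ℂ) : ℂ :=
  (Nat.card K : ℂ)⁻¹ * ∑ᶠ x : K, θ (x ^ 2)

/-!
Every invariant bilinear form on an irreducible representation of `S_n` is symmetric, by induction
on `n`. Each `g` is conjugate to `g⁻¹` by a permutation fixing a given point, so an operator in the
image of `ℂ[S_n]` that commutes with `S_{n-1}` is self-adjoint for the form. This applies to the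
projection onto an `S_{n-1}`-irreducible subspace, so the form is nonzero on that subspace, where it
is symmetric by induction.

Let `ρ` be an irreducible representation of a subgroup `N` of `S_n` of index at most two. The
indicator of `ρ` at the coset of `t` is the trace of `B ↦ (u, v) ↦ B v (ρ (t ^ 2) u)` on the space
of pairings `B` invariant under `ρ` and its twist by `t`, a space of dimension at most one. A
nonzero such `B` coinduces to a nondegenerate invariant form on the representation of `S_n`
coinduced from `ρ`, whose endomorphism algebra is commutative. The same argument, with `S_n` itself
in place of `S_{n-1}`, makes the coinduced form symmetric, so that the trace is that of the
identity.
-/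

section PermConjInv

variable {α : Type*}

theorem zpow_neg_apply_eq_of_zpow_apply_eq (g : Equiv.Perm α) {i j : ℤ} {x : α}
    (h : (g ^ i) x = (g ^ j) x) : (g ^ (-i)) x = (g ^ (-j)) x := by
  rw [zpow_neg, Equiv.Perm.inv_eq_iff_eq, ← Equiv.Perm.mul_apply, zpow_neg,
    (((Commute.refl g).zpow_zpow i j).inv_right).eq, Equiv.Perm.mul_apply, h,
    Equiv.Perm.inv_def, Equiv.symm_apply_apply]

theorem exists_sameCycle_section (g : Equiv.Perm α) (a : α) :
    ∃ r : α → α, r a = a ∧ (∀ x, g.SameCycle (r x) x) ∧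
      ∀ x y, g.SameCycle x y → r x = r y := by
  let S := Equiv.Perm.SameCycle.setoid g
  refine ⟨fun x ↦ if g.SameCycle a x then a else (Quotient.mk S x).out, ?_, fun x ↦ ?_,
    fun x y hxy ↦ ?_⟩
  · simp only [Equiv.Perm.SameCycle.refl, if_true]
  · beta_reduce
    split_ifs with h
    exacts [h, Quotient.mk_out (s := S) x]
  · have hiff : g.SameCycle a x ↔ g.SameCycle a y := ⟨(·.trans hxy), (·.trans hxy.symm)⟩
    simp only [hiff, Quotient.sound (s := S) hxy]

-- With a base point `r x` on each cycle, reflect every cycle: `g ^ i (r x) ↦ g ^ (-i) (r x)`.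
theorem exists_conj_eq_inv_of_apply_eq (g : Equiv.Perm α) (a : α) :
    ∃ k : Equiv.Perm α, k a = a ∧ k * g * k⁻¹ = g⁻¹ := by
  obtain ⟨r, hra, hr, hr_congr⟩ := exists_sameCycle_section g a
  choose i hi using hr
  let k : α → α := fun x ↦ (g ^ (-i x)) (r x)
  have k_eq {x : α} {j : ℤ} (hj : (g ^ j) (r x) = x) : k x = (g ^ (-j)) (r x) :=
    zpow_neg_apply_eq_of_zpow_apply_eq g ((hi x).trans hj.symm)
  have r_zpow (x : α) (j : ℤ) : r ((g ^ j) (r x)) = r x :=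
    hr_congr _ _ ((Equiv.Perm.sameCycle_zpow_left.2 ⟨i x, hi x⟩))
  have k_invol : Function.Involutive k := fun x ↦ by
    have hk : k (k x) = (g ^ (- -i x)) (r (k x)) := k_eq (by rw [r_zpow])
    rw [hk, r_zpow, neg_neg, hi]
  have k_map (x : α) : k (g x) = g⁻¹ (k x) := by
    have hrg : r (g x) = r x := hr_congr _ _ (Equiv.Perm.sameCycle_apply_left.2 (.refl g x))
    have hk : k (g x) = (g ^ (-(1 + i x))) (r (g x)) :=
      k_eq (by rw [hrg, zpow_one_add, Equiv.Perm.mul_apply, hi])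
    rw [hk, hrg, neg_add, zpow_add, zpow_neg_one, Equiv.Perm.mul_apply]
  refine ⟨k_invol.toPerm k, ?_, mul_inv_eq_iff_eq_mul.2 (Equiv.ext k_map)⟩
  have hka : k a = (g ^ (-(0 : ℤ))) (r a) := k_eq (by rw [hra, zpow_zero, Equiv.Perm.one_apply])
  exact hka.trans (by rw [hra, neg_zero, zpow_zero, Equiv.Perm.one_apply])

end PermConjInv

section InvariantPairings

variable {k G V W : Type*} [Field k] [Group G] [AddCommGroup V] [Module k V] [AddCommGroup W]
  [Module k W] {ρ : Representation k G V} {ρ' : Representation k G W}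

theorem exists_intertwiningMap_eq_smul [IsAlgClosed k] [FiniteDimensional k V]
    [FiniteDimensional k W] [ρ.IsIrreducible] (hVW : Module.finrank k V = Module.finrank k W)
    {f : ρ.IntertwiningMap ρ'} (hf : f ≠ 0) (f' : ρ.IntertwiningMap ρ') :
    ∃ c : k, f' = c • f := by
  have f_inj : Function.Injective f :=
    (Representation.IsIrreducible.injective_or_eq_zero f).resolve_right hf
  let e : ρ.Equiv ρ' :=
    .mk (LinearEquiv.ofInjectiveOfFinrankEq f.toLinearMap f_inj hVW) f.isIntertwining'
  obtain ⟨c, hc⟩ :=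
    Representation.IsIrreducible.algebraMap_intertwiningMap_bijective_of_isAlgClosed.2
      (e.symm.toIntertwiningMap.comp f')
  refine ⟨c, DFunLike.ext _ _ fun v ↦ ?_⟩
  have hcv : c • v = e.symm (f' v) := DFunLike.congr_fun hc v
  calc f' v = e (c • v) := by rw [hcv, Representation.Equiv.apply_symm_apply]
    _ = c • f v := map_smul e c v

/-- A bilinear pairing of two representations of `G` that is invariant under the diagonal action of
`G`. Taking `ρ' = ρ` gives the invariant bilinear forms on `ρ`, and `ρ' = ρ.comp σ` the forms
invariant up to a twist by the automorphism `σ`. -/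
def IsInvariantPairing (ρ : Representation k G V) (ρ' : Representation k G W)
    (B : V →ₗ[k] W →ₗ[k] k) : Prop :=
  ∀ g v w, B (ρ g v) (ρ' g w) = B v w

namespace IsInvariantPairing

variable {B B' : V →ₗ[k] W →ₗ[k] k}

theorem isIntertwiningMap (hB : IsInvariantPairing ρ ρ' B) :
    Representation.IsIntertwiningMap ρ ρ'.dual B where
  isIntertwining g v := by
    ext w
    have h := hB g v (ρ' g⁻¹ w)
    rwa [Representation.self_inv_apply] at h

/-- An invariant pairing, seen as a morphism to the dual representation. -/
def toIntertwiningMap (hB : IsInvariantPairing ρ ρ' B) : ρ.IntertwiningMap ρ'.dual :=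
  B.intertwiningMap_of_isIntertwiningMap ρ ρ'.dual hB.isIntertwiningMap.isIntertwining

theorem toIntertwiningMap_ne_zero (hB : IsInvariantPairing ρ ρ' B) (hB₀ : B ≠ 0) :
    hB.toIntertwiningMap ≠ 0 :=
  fun h ↦ hB₀ (congrArg Representation.IntertwiningMap.toLinearMap h)

theorem injective [ρ.IsIrreducible] (hB : IsInvariantPairing ρ ρ' B) (hB₀ : B ≠ 0) :
    Function.Injective B :=
  (Representation.IsIrreducible.injective_or_eq_zero _).resolve_right
    (hB.toIntertwiningMap_ne_zero hB₀)

theorem exists_eq_smul [IsAlgClosed k] [FiniteDimensional k V] [FiniteDimensional k W]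
    [ρ.IsIrreducible] (hVW : Module.finrank k V = Module.finrank k W)
    (hB : IsInvariantPairing ρ ρ' B) (hB₀ : B ≠ 0) (hB' : IsInvariantPairing ρ ρ' B') :
    ∃ c : k, B' = c • B := by
  obtain ⟨c, hc⟩ := exists_intertwiningMap_eq_smul
    (hVW.trans Subspace.dual_finrank_eq.symm) (hB.toIntertwiningMap_ne_zero hB₀)
    hB'.toIntertwiningMap
  exact ⟨c, congrArg Representation.IntertwiningMap.toLinearMap hc⟩

end IsInvariantPairing

end InvariantPairings

section Semisimple

variable {k G V : Type*} [Field k] [Monoid G] [AddCommGroup V] [Module k V]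
  {ρ : Representation k G V}

theorem exists_isProj_intertwiningMap [ρ.IsSemisimpleRepresentation] (W : Subrepresentation ρ) :
    ∃ E : ρ.IntertwiningMap ρ, LinearMap.IsProj W.toSubmodule E.toLinearMap := by
  have := ρ.isSemisimpleRepresentation_iff_isSemisimpleModule_asModule.1 ‹_›
  obtain ⟨q, hq⟩ := exists_isCompl W.asSubmodule
  exact ⟨(Representation.IntertwiningMap.equivAlgEnd (ρ := ρ)).symm
    (Submodule.projection W.asSubmodule q hq), Submodule.projection_apply_mem hq,
    fun w hw ↦ Submodule.projection_apply_left hq ⟨w, hw⟩⟩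

theorem toRepresentation_isIrreducible_of_isAtom {W : Subrepresentation ρ} (hW : IsAtom W) :
    W.toRepresentation.IsIrreducible := by
  let i (σ : Subrepresentation W.toRepresentation) : Subrepresentation ρ :=
    ⟨σ.toSubmodule.map W.toSubmodule.subtype, by
      rintro g _ ⟨w, hw, rfl⟩
      exact ⟨_, σ.apply_mem_toSubmodule g hw, rfl⟩⟩
  have i_inj : Function.Injective i := fun σ τ h ↦
    Subrepresentation.toSubmodule_injective <| Submodule.map_injective_of_injective
      W.toSubmodule.injective_subtype (congrArg Subrepresentation.toSubmodule h)
  have i_bot : i ⊥ = ⊥ := Subrepresentation.toSubmodule_injective (Submodule.map_bot _)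
  have i_top : i ⊤ = W := Subrepresentation.toSubmodule_injective (Submodule.map_subtype_top _)
  have i_le (σ) : i σ ≤ W := Submodule.map_subtype_le _ σ.toSubmodule
  refine { exists_pair_ne := ⟨⊥, ⊤, fun h ↦ hW.1 ?_⟩, eq_bot_or_eq_top := fun σ ↦ ?_ }
  · rw [← i_top, ← h, i_bot]
  · refine (hW.le_iff.1 (i_le σ)).imp (fun h ↦ i_inj (h.trans i_bot.symm)) fun h ↦
      i_inj (h.trans i_top.symm)

theorem nontrivial_of_isIrreducible (ρ : Representation k G V) [ρ.IsIrreducible] : Nontrivial V :=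
  IsSimpleModule.nontrivial (MonoidAlgebra k G) ρ.asModule

theorem exists_isIrreducible_toRepresentation [Nontrivial V] [ρ.IsSemisimpleRepresentation] :
    ∃ W : Subrepresentation ρ, W.toRepresentation.IsIrreducible := by
  have := ρ.isSemisimpleRepresentation_iff_isSemisimpleModule_asModule.1 ‹_›
  have : Nontrivial ρ.asModule := inferInstanceAs (Nontrivial V)
  have : IsAtomic (Subrepresentation ρ) :=
    Subrepresentation.subrepresentationSubmoduleOrderIso.isAtomic_iff.2 inferInstance
  have : Nontrivial (Subrepresentation ρ) :=
    Subrepresentation.subrepresentationSubmoduleOrderIso.toEquiv.nontrivial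
  obtain ⟨W, hW⟩ := IsAtomic.exists_atom (Subrepresentation ρ)
  exact ⟨W, toRepresentation_isIrreducible_of_isAtom hW⟩

-- Jacobson density for `V` as a module over its own endomorphism algebra.
theorem exists_asAlgebraHom_eq_of_commute [ρ.IsSemisimpleRepresentation] [FiniteDimensional k V]
    {T : Module.End k V} (hT : ∀ S : ρ.IntertwiningMap ρ, Commute T S.toLinearMap) :
    ∃ x, ρ.asAlgebraHom x = T := by
  have := ρ.isSemisimpleRepresentation_iff_isSemisimpleModule_asModule.1 ‹_›
  let e := Representation.IntertwiningMap.equivAlgEnd (ρ := ρ)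
  let T' : Module.End (Module.End (MonoidAlgebra k G) ρ.asModule) ρ.asModule :=
    { toFun := T
      map_add' := T.map_add
      map_smul' S v := LinearMap.congr_fun (hT (e.symm S)).eq v }
  obtain ⟨s, hs⟩ := Module.Finite.fg_top (R := k) (M := V)
  obtain ⟨x, hx⟩ := jacobson_density T' s
  exact ⟨x, LinearMap.ext_on hs fun v hv ↦ (hx v hv).symm⟩

end Semisimple

section SelfAdjoint

variable {k G K V : Type*} [Field k] [Group G] [Group K] [AddCommGroup V] [Module k V]
  {ρ : Representation k G V} {B : V →ₗ[k] V →ₗ[k] k} {φ : K →* G}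

theorem isSelfAdjoint_sum_conj [Fintype K] (hφ : ∀ g, ∃ κ, φ κ * g * (φ κ)⁻¹ = g⁻¹)
    (hB : IsInvariantPairing ρ ρ B) (g : G) :
    B.IsSelfAdjoint (∑ κ, ρ (φ κ * g * (φ κ)⁻¹) : Module.End k V) := by
  have adjoint (g : G) (u v : V) : B (ρ g u) v = B u (ρ g⁻¹ v) := by
    rw [← hB g u (ρ g⁻¹ v), Representation.self_inv_apply]
  obtain ⟨κ₀, hκ₀⟩ := hφ g
  have sum_inv : ∑ κ, ρ (φ κ * g * (φ κ)⁻¹) = ∑ κ, ρ (φ κ * g * (φ κ)⁻¹)⁻¹ := by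
    refine (Equiv.sum_comp (Equiv.mulRight κ₀) _).symm.trans (Finset.sum_congr rfl fun κ _ ↦ ?_)
    congr 1
    calc φ (κ * κ₀) * g * (φ (κ * κ₀))⁻¹ = φ κ * (φ κ₀ * g * (φ κ₀)⁻¹) * (φ κ)⁻¹ := by
          rw [map_mul]; group
      _ = (φ κ * g * (φ κ)⁻¹)⁻¹ := by rw [hκ₀]; group
  intro u v
  calc B ((∑ κ, ρ (φ κ * g * (φ κ)⁻¹)) u) v = ∑ κ, B (ρ (φ κ * g * (φ κ)⁻¹) u) v := by
        simp only [LinearMap.sum_apply, map_sum]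
    _ = B u ((∑ κ, ρ (φ κ * g * (φ κ)⁻¹)⁻¹) v) := by
        simp only [LinearMap.sum_apply, map_sum, adjoint]
    _ = B u ((∑ κ, ρ (φ κ * g * (φ κ)⁻¹)) v) := by rw [sum_inv]

-- `K`-conjugation fixes `T = ∑ a g • ρ g`, so `|K| • T` is the combination with coefficients `a g`
-- of the averages of the `ρ g` over `K`, each of which is self-adjoint.
theorem isSelfAdjoint_asAlgebraHom_of_commute [Finite K] [NeZero (Nat.card K : k)]
    (hφ : ∀ g, ∃ κ, φ κ * g * (φ κ)⁻¹ = g⁻¹) (hB : IsInvariantPairing ρ ρ B)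
    {x : MonoidAlgebra k G} (hx : ∀ κ, Commute (ρ.asAlgebraHom x) (ρ (φ κ))) :
    B.IsSelfAdjoint (ρ.asAlgebraHom x) := by
  have := Fintype.ofFinite K
  have sum_mem (y : MonoidAlgebra k G) :
      ∑ κ, ρ (φ κ) * ρ.asAlgebraHom y * ρ (φ κ)⁻¹ ∈ B.selfAdjointSubmodule := by
    induction y using MonoidAlgebra.induction_linear with
    | zero => simp only [map_zero, mul_zero, zero_mul, Finset.sum_const_zero, zero_mem]
    | add y z hy hz =>
      simpa only [map_add, mul_add, add_mul, Finset.sum_add_distrib] using add_mem hy hz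
    | single g a =>
      simpa only [Representation.asAlgebraHom_single, mul_smul_comm, smul_mul_assoc,
        ← Finset.smul_sum, ← map_mul] using
        Submodule.smul_mem _ a ((B.mem_selfAdjointSubmodule _).2 (isSelfAdjoint_sum_conj hφ hB g))
  have sum_eq : ∑ κ, ρ (φ κ) * ρ.asAlgebraHom x * ρ (φ κ)⁻¹ =
      (Nat.card K : k) • ρ.asAlgebraHom x := by
    simp only [← (hx _).eq, mul_assoc, ← map_mul, mul_inv_cancel, map_one, mul_one,
      Finset.sum_const, Finset.card_univ, Nat.card_eq_fintype_card, Nat.cast_smul_eq_nsmul]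
  rw [← B.mem_selfAdjointSubmodule]
  refine (Submodule.smul_mem_iff _ (NeZero.ne (Nat.card K : k))).1 ?_
  rw [← sum_eq]
  exact sum_mem x

end SelfAdjoint

/-- Every invariant bilinear form on a finite-dimensional irreducible representation of `G` over `k`
is symmetric; over an algebraically closed field this says that no irreducible representation of
`G` is symplectic. The universe is that of the underlying spaces of the representations. -/
def InvariantFormsSymmetric.{u, v, w} (k : Type u) (G : Type v) [Field k] [Group G] : Prop :=
  ∀ ⦃V : Type w⦄ [AddCommGroup V] [Module k V] [FiniteDimensional k V]
    (ρ : Representation k G V) [ρ.IsIrreducible] ⦃B : V →ₗ[k] V →ₗ[k] k⦄,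
    IsInvariantPairing ρ ρ B → ∀ u v, B u v = B v u

namespace InvariantFormsSymmetric

universe u v v' w

variable {k : Type u} {G : Type v} {K : Type v'} [Field k] [Group G] [Group K]

theorem of_isMulCommutative [IsAlgClosed k] [IsMulCommutative G] :
    InvariantFormsSymmetric.{u, v, w} k G := by
  intro V _ _ _ ρ _ B _ u v
  obtain ⟨e, -, he⟩ := finrank_eq_one_iff'.1
    (Representation.IsIrreducible.finrank_eq_one_of_isMulCommutative ρ)
  obtain ⟨a, rfl⟩ := he u
  obtain ⟨b, rfl⟩ := he v
  simp only [map_smul, LinearMap.smul_apply, smul_comm a b]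

-- An equivariant projection onto an irreducible `K`-subrepresentation `W` commutes with `End_G V`,
-- so it is self-adjoint; hence `B` does not vanish on `W`, where it is symmetric.
theorem eq_one_of_forall_commute (hK : InvariantFormsSymmetric.{u, v', w} k K) [Finite G] [Finite K]
    [NeZero (Nat.card G : k)] [NeZero (Nat.card K : k)] {φ : K →* G}
    (hφ : ∀ g, ∃ κ, φ κ * g * (φ κ)⁻¹ = g⁻¹) {V : Type w} [AddCommGroup V] [Module k V]
    [FiniteDimensional k V] [Nontrivial V] {ρ : Representation k G V}
    (hcomm : ∀ (T : Representation.IntertwiningMap (ρ.comp φ) (ρ.comp φ))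
      (S : ρ.IntertwiningMap ρ), Commute T.toLinearMap S.toLinearMap)
    {B : V →ₗ[k] V →ₗ[k] k} (hB : IsInvariantPairing ρ ρ B) (B_inj : Function.Injective B)
    {c : k} (hc : ∀ u v, B u v = c * B v u) : c = 1 := by
  let ρK : Representation k K V := ρ.comp φ
  obtain ⟨W, hW⟩ := exists_isIrreducible_toRepresentation (ρ := ρK)
  obtain ⟨E, hE⟩ := exists_isProj_intertwiningMap W
  obtain ⟨x, hx⟩ := exists_asAlgebraHom_eq_of_commute (hcomm E)
  have E_adj : B.IsSelfAdjoint E.toLinearMap := hx ▸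
    isSelfAdjoint_asAlgebraHom_of_commute hφ hB fun κ ↦ hx ▸ E.isIntertwining' κ
  have B_symm (u v : W.toSubmodule) : B u v = B v u :=
    hK W.toRepresentation (B := B.domRestrict₁₂ W.toSubmodule W.toSubmodule)
      (fun κ u v ↦ hB (φ κ) u v) u v
  have := nontrivial_of_isIrreducible W.toRepresentation
  obtain ⟨w, hw⟩ := exists_ne (0 : W.toSubmodule)
  obtain ⟨v, hv⟩ : ∃ v, B w v ≠ 0 := by
    by_contra! h
    exact hw (Subtype.ext (B_inj ((LinearMap.ext h).trans (map_zero B).symm)))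
  have hwv : B (E.toLinearMap v) w ≠ 0 := by
    rwa [B_symm ⟨_, hE.map_mem v⟩ w, ← E_adj, hE.map_id w w.2]
  have h : 1 * B (E.toLinearMap v) w = c * B (E.toLinearMap v) w :=
    (one_mul _).trans ((B_symm ⟨_, hE.map_mem v⟩ w).trans (hc w _))
  exact (mul_right_cancel₀ hwv h).symm

theorem of_exists_conj_eq_inv [IsAlgClosed k] (hK : InvariantFormsSymmetric.{u, v', w} k K)
    [Finite G] [Finite K] [NeZero (Nat.card G : k)] [NeZero (Nat.card K : k)] {φ : K →* G}
    (hφ : ∀ g, ∃ κ, φ κ * g * (φ κ)⁻¹ = g⁻¹) : InvariantFormsSymmetric.{u, v, w} k G := by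
  intro V _ _ _ ρ _ B hB u v
  rcases eq_or_ne B 0 with rfl | hB₀
  · rfl
  have flip_invariant : IsInvariantPairing ρ ρ B.flip := fun g v w ↦ hB g w v
  obtain ⟨c, hc⟩ := hB.exists_eq_smul rfl hB₀ flip_invariant
  have flip_apply (u v : V) : B u v = c * B v u := LinearMap.congr_fun₂ hc v u
  have hcomm (T : Representation.IntertwiningMap (ρ.comp φ) (ρ.comp φ))
      (S : ρ.IntertwiningMap ρ) : Commute T.toLinearMap S.toLinearMap := by
    obtain ⟨a, rfl⟩ :=
      Representation.IsIrreducible.algebraMap_intertwiningMap_bijective_of_isAlgClosed.2 S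
    exact (Algebra.commutes a T.toLinearMap).symm
  have := nontrivial_of_isIrreducible ρ
  rw [flip_apply, hK.eq_one_of_forall_commute hφ hcomm hB (hB.injective hB₀) flip_apply, one_mul]

theorem perm [IsAlgClosed k] [CharZero k] (α : Type v) [Finite α] :
    InvariantFormsSymmetric.{u, v, w} k (Equiv.Perm α) := by
  induction α using Finite.induction_subsingleton_or_nontrivial with
  | hbase α =>
    have : IsMulCommutative (Equiv.Perm α) := ⟨⟨fun _ _ ↦ Subsingleton.elim _ _⟩⟩
    exact of_isMulCommutative
  | hstep α ih =>
    obtain ⟨a⟩ := ‹Nontrivial α›.to_nonempty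
    have card_lt : Nat.card {x // x ≠ a} < Nat.card α := Finite.card_subtype_lt (not_not_intro rfl)
    refine (ih {x // x ≠ a} card_lt).of_exists_conj_eq_inv (φ := Equiv.Perm.ofSubtype) fun g ↦ ?_
    obtain ⟨κ, hκa, hκ⟩ := exists_conj_eq_inv_of_apply_eq g a
    have κ_ne (x : α) : κ x ≠ a ↔ x ≠ a := κ.injective.ne_iff' hκa
    refine ⟨κ.subtypePerm κ_ne, ?_⟩
    rwa [Equiv.Perm.ofSubtype_subtypePerm]
    rintro x hx rfl
    exact hx hκa

end InvariantFormsSymmetric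

section Coinduction

variable {k G V : Type*} [Field k] [Group G] [AddCommGroup V] [Module k V] {N : Subgroup G}

/-- The element of the representation coinduced from `N` that is supported on `N` and takes the
value `v` at `1`. -/
noncomputable def coindSingle (ρ : Representation k N V) : V →ₗ[k] ρ.coindV N.subtype where
  toFun v := ⟨fun y ↦ if hy : y ∈ N then ρ ⟨y, hy⟩ v else 0, fun n y ↦ by
    beta_reduce
    rw [Subgroup.subtype_apply]
    by_cases hy : y ∈ N
    · rw [dif_pos hy, dif_pos (N.mul_mem n.2 hy), ← Module.End.mul_apply, ← map_mul]
      rfl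
    · rw [dif_neg hy, dif_neg ((N.mul_mem_cancel_left n.2).not.2 hy), map_zero]⟩
  map_add' v w := by
    ext y
    by_cases hy : y ∈ N <;> simp [hy]
  map_smul' c v := by
    ext y
    by_cases hy : y ∈ N <;> simp [hy]

variable {ρ : Representation k N V}

theorem coindSingle_apply_of_mem (v : V) {y : G} (hy : y ∈ N) :
    (coindSingle ρ v).1 y = ρ ⟨y, hy⟩ v :=
  dif_pos hy

theorem coindSingle_apply_of_notMem (v : V) {y : G} (hy : y ∉ N) : (coindSingle ρ v).1 y = 0 :=
  dif_neg hy

theorem coindSingle_apply_one (v : V) : (coindSingle ρ v).1 1 = v :=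
  (coindSingle_apply_of_mem v N.one_mem).trans (LinearMap.congr_fun (map_one ρ) v)

theorem coindSingle_injective : Function.Injective (coindSingle ρ) := fun v w h ↦ by
  rw [← coindSingle_apply_one (ρ := ρ) v, h, coindSingle_apply_one]

theorem coindSingle_map (n : N) (v : V) :
    coindSingle ρ (ρ n v) = ρ.coind N.subtype n (coindSingle ρ v) := by
  ext y
  change (coindSingle ρ (ρ n v)).1 y = (coindSingle ρ v).1 (y * n)
  by_cases hy : y ∈ N
  · rw [coindSingle_apply_of_mem _ hy, coindSingle_apply_of_mem _ (N.mul_mem hy n.2),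
      ← Module.End.mul_apply, ← map_mul]
    rfl
  · rw [coindSingle_apply_of_notMem _ hy,
      coindSingle_apply_of_notMem _ (by rwa [N.mul_mem_cancel_right n.2])]

theorem coindV_apply_mul (f : ρ.coindV N.subtype) (n : N) (y : G) : f.1 (n * y) = ρ n (f.1 y) :=
  f.2 n y

theorem sum_ite_mem_const {M : Type*} [AddCommMonoid M] [Fintype G] (m : M) :
    ∑ x : G, (if x ∈ N then m else 0) = Nat.card N • m := by
  rw [← Finset.sum_filter, Finset.sum_const, Nat.card_eq_fintype_card, Fintype.card_subtype]

theorem sum_coind_coindSingle [Fintype G] (f : ρ.coindV N.subtype) :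
    ∑ x, ρ.coind N.subtype x⁻¹ (coindSingle ρ (f.1 x)) = Nat.card N • f := by
  ext y
  have summand (x : G) : (coindSingle ρ (f.1 x)).1 (y * x⁻¹) =
      if y * x⁻¹ ∈ N then f.1 y else 0 := by
    split_ifs with h
    · rw [coindSingle_apply_of_mem _ h, ← coindV_apply_mul, inv_mul_cancel_right]
    · exact coindSingle_apply_of_notMem _ h
  calc (∑ x, ρ.coind N.subtype x⁻¹ (coindSingle ρ (f.1 x))).1 y
      = ∑ x, (coindSingle ρ (f.1 x)).1 (y * x⁻¹) := by
        simp only [AddSubmonoidClass.coe_finsetSum, Finset.sum_apply]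
        rfl
    _ = ∑ x, if x ∈ N then f.1 y else 0 := by
        simp only [summand]
        exact ((Equiv.inv G).trans (Equiv.mulLeft y)).sum_comp fun x ↦ if x ∈ N then f.1 y else 0
    _ = (Nat.card N • f).1 y := sum_ite_mem_const _

theorem coind_intertwiningMap_ext [Finite G] [NeZero (Nat.card N : k)] {W : Type*}
    [AddCommGroup W] [Module k W] {σ : Representation k G W}
    {T T' : (ρ.coind N.subtype).IntertwiningMap σ}
    (h : ∀ v, T (coindSingle ρ v) = T' (coindSingle ρ v)) : T = T' := by
  have := Fintype.ofFinite G
  ext f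
  refine smul_right_injective W (NeZero.ne (Nat.card N : k)) ?_
  simp only [Nat.cast_smul_eq_nsmul, ← map_nsmul, ← sum_coind_coindSingle, map_sum,
    Representation.IntertwiningMap.toLinearMap_apply,
    Representation.IntertwiningMap.isIntertwining, h]

end Coinduction

section IndexLeTwo

variable {G : Type*} [Group G] {N : Subgroup G} [N.FiniteIndex]

theorem index_eq_one_or_two_of_index_le_two (hN : N.index ≤ 2) : N.index = 1 ∨ N.index = 2 := by
  have := N.index_ne_zero_of_finite
  omega

theorem normal_of_index_le_two (hN : N.index ≤ 2) : N.Normal := by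
  obtain hN | hN := index_eq_one_or_two_of_index_le_two hN
  · rw [Subgroup.index_eq_one.1 hN]
    infer_instance
  · exact Subgroup.normal_of_index_eq_two hN

theorem sq_mem_of_index_le_two (hN : N.index ≤ 2) (x : G) : x ^ 2 ∈ N := by
  obtain hN | hN := index_eq_one_or_two_of_index_le_two hN
  · rw [Subgroup.index_eq_one.1 hN]
    exact Subgroup.mem_top _
  · exact Subgroup.sq_mem_of_index_two hN x

theorem exists_forall_mem_or_mul_inv_mem (hN : N.index ≤ 2) : ∃ s, ∀ y, y ∈ N ∨ y * s⁻¹ ∈ N := by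
  obtain hN | hN := index_eq_one_or_two_of_index_le_two hN
  · exact ⟨1, fun y ↦ Or.inl (Subgroup.index_eq_one.1 hN ▸ Subgroup.mem_top y)⟩
  · obtain ⟨s, hs⟩ := Subgroup.index_eq_two_iff.1 hN
    exact ⟨s⁻¹, fun y ↦ by rw [inv_inv]; exact (hs y).or.symm⟩

end IndexLeTwo

section CoinductionNormal

variable {k G V : Type*} [Field k] [Group G] [AddCommGroup V] [Module k V] {N : Subgroup G}
  [N.Normal]

/-- The twist `n ↦ ρ (t n t⁻¹)` of a representation `ρ` of a normal subgroup by an element `t` of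
the ambient group. -/
def conjTwist (ρ : Representation k N V) (t : G) : Representation k N V :=
  ρ.comp (MulAut.conjNormal t).toMonoidHom

theorem conjTwist_apply (ρ : Representation k N V) (t : G) (n : N) :
    conjTwist ρ t n = ρ (MulAut.conjNormal t n) :=
  rfl

variable {ρ : Representation k N V}

theorem coindV_apply_mul_right (f : ρ.coindV N.subtype) (x : G) (n : N) :
    f.1 (x * n) = conjTwist ρ x n (f.1 x) := by
  rw [conjTwist_apply, ← coindV_apply_mul, MulAut.conjNormal_apply, inv_mul_cancel_right]

/-- The block `v ↦ T v x` of an endomorphism `T` of the coinduced representation, which by Mackey's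
formula is the direct sum of the twists of `ρ` by coset representatives. -/
noncomputable def coindBlock (x : G) :
    (ρ.coind N.subtype).IntertwiningMap (ρ.coind N.subtype) →ₗ[k]
      ρ.IntertwiningMap (conjTwist ρ x) where
  toFun T :=
    { toLinearMap :=
        LinearMap.proj x ∘ₗ Submodule.subtype _ ∘ₗ T.toLinearMap ∘ₗ coindSingle ρ
      isIntertwining' n := LinearMap.ext fun v ↦ by
        change (T (coindSingle ρ (ρ n v))).1 x = conjTwist ρ x n ((T (coindSingle ρ v)).1 x)
        rw [coindSingle_map, T.isIntertwining, ← coindV_apply_mul_right]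
        rfl }
  map_add' _ _ := rfl
  map_smul' _ _ := rfl

theorem coindBlock_one_ne_zero [Nontrivial V] :
    coindBlock 1 (1 : (ρ.coind N.subtype).IntertwiningMap (ρ.coind N.subtype)) ≠ 0 := by
  obtain ⟨v, hv⟩ := exists_ne (0 : V)
  exact fun h ↦ hv ((coindSingle_apply_one v).symm.trans (DFunLike.congr_fun h v))

variable [Finite G] [NeZero (Nat.card N : k)]

theorem coind_intertwiningMap_ext_of_coindBlock {s : G} (hs : ∀ y, y ∈ N ∨ y * s⁻¹ ∈ N)
    {T T' : (ρ.coind N.subtype).IntertwiningMap (ρ.coind N.subtype)}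
    (h1 : coindBlock 1 T = coindBlock 1 T') (h2 : coindBlock s T = coindBlock s T') : T = T' := by
  refine coind_intertwiningMap_ext fun v ↦ Subtype.ext (funext fun y ↦ ?_)
  have apply_one : (T (coindSingle ρ v)).1 1 = (T' (coindSingle ρ v)).1 1 :=
    DFunLike.congr_fun h1 v
  have apply_s : (T (coindSingle ρ v)).1 s = (T' (coindSingle ρ v)).1 s :=
    DFunLike.congr_fun h2 v
  rcases hs y with hy | hy
  · have h (f : ρ.coindV N.subtype) : f.1 y = ρ ⟨y, hy⟩ (f.1 1) := by
      rw [← coindV_apply_mul, mul_one]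
    rw [h, h, apply_one]
  · have h (f : ρ.coindV N.subtype) : f.1 y = ρ ⟨y * s⁻¹, hy⟩ (f.1 s) := by
      rw [← coindV_apply_mul, inv_mul_cancel_right]
    rw [h, h, apply_s]

-- Modulo scalars an endomorphism has block `0` at `1`, so by Schur's lemma it is determined up to
-- a factor by its remaining block.
theorem coind_intertwiningMap_commute [IsAlgClosed k] [FiniteDimensional k V] [ρ.IsIrreducible]
    (hN : N.index ≤ 2) (T T' : (ρ.coind N.subtype).IntertwiningMap (ρ.coind N.subtype)) :
    Commute T T' := by
  obtain ⟨s, hs⟩ := exists_forall_mem_or_mul_inv_mem hN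
  have exists_eq_add_smul (T : (ρ.coind N.subtype).IntertwiningMap (ρ.coind N.subtype)) :
      ∃ (T₀ : (ρ.coind N.subtype).IntertwiningMap (ρ.coind N.subtype)) (a : k),
        coindBlock 1 T₀ = 0 ∧ T = T₀ + a • 1 := by
    have := nontrivial_of_isIrreducible ρ
    obtain ⟨a, ha⟩ := exists_intertwiningMap_eq_smul rfl coindBlock_one_ne_zero (coindBlock 1 T)
    exact ⟨T + (-a) • 1, a, by rw [map_add, map_smul, ha, ← add_smul, add_neg_cancel, zero_smul],
      by rw [add_assoc, ← add_smul, neg_add_cancel, zero_smul, add_zero]⟩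
  have proportional {T T' : (ρ.coind N.subtype).IntertwiningMap (ρ.coind N.subtype)}
      (hT : coindBlock 1 T = 0) (hT' : coindBlock 1 T' = 0) (hT₀ : T ≠ 0) :
      ∃ c : k, T' = c • T := by
    have block_ne : coindBlock s T ≠ 0 := fun h ↦ hT₀ <|
      coind_intertwiningMap_ext_of_coindBlock hs (by rw [hT, map_zero]) (by rw [h, map_zero])
    obtain ⟨c, hc⟩ := exists_intertwiningMap_eq_smul rfl block_ne (coindBlock s T')
    exact ⟨c, coind_intertwiningMap_ext_of_coindBlock hs
      (by rw [hT', map_smul, hT, smul_zero]) (by rw [hc, map_smul])⟩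
  obtain ⟨T, a, hT, rfl⟩ := exists_eq_add_smul T
  obtain ⟨T', a', hT', rfl⟩ := exists_eq_add_smul T'
  have comm : Commute T T' := by
    rcases eq_or_ne T 0 with rfl | hT₀
    · exact Commute.zero_left T'
    · obtain ⟨c, rfl⟩ := proportional hT hT' hT₀
      exact (Commute.refl T).smul_right c
  exact (comm.add_right ((Commute.one_right T).smul_right a')).add_left
    ((Commute.one_left _).smul_left a)

end CoinductionNormal

section CoinductionForm

variable {k G V : Type*} [Field k] [Group G] [Fintype G] [AddCommGroup V] [Module k V]
  {N : Subgroup G} {ρ : Representation k N V} {B : V →ₗ[k] V →ₗ[k] k} {t : G}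

variable (ρ B t) in
/-- The form `(f, f') ↦ ∑ x, B (f x) (f' (t x))` on the coinduced representation. When `B` is an
invariant pairing of `ρ` with its twist by `t`, the summands are constant on the cosets of `N`. -/
noncomputable def coindForm : ρ.coindV N.subtype →ₗ[k] ρ.coindV N.subtype →ₗ[k] k :=
  ∑ x, B.compl₁₂ (LinearMap.proj x ∘ₗ (ρ.coindV N.subtype).subtype)
    (LinearMap.proj (t * x) ∘ₗ (ρ.coindV N.subtype).subtype)

theorem coindForm_apply (f f' : ρ.coindV N.subtype) :
    coindForm ρ B t f f' = ∑ x, B (f.1 x) (f'.1 (t * x)) := by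
  simp only [coindForm, LinearMap.sum_apply]
  rfl

theorem isInvariantPairing_coindForm :
    IsInvariantPairing (ρ.coind N.subtype) (ρ.coind N.subtype) (coindForm ρ B t) := by
  intro g f f'
  calc coindForm ρ B t (ρ.coind N.subtype g f) (ρ.coind N.subtype g f')
      = ∑ x, B (f.1 (x * g)) (f'.1 (t * (x * g))) := by
        simp only [coindForm_apply, ← mul_assoc]
        rfl
    _ = coindForm ρ B t f f' := by
        rw [coindForm_apply]
        exact Equiv.sum_comp (Equiv.mulRight g) fun x ↦ B (f.1 x) (f'.1 (t * x))

theorem coindForm_eq_mul_flip (ht : t ^ 2 ∈ N) {c : k}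
    (hc : ∀ u v, B v (ρ ⟨t ^ 2, ht⟩ u) = c * B u v) (f f' : ρ.coindV N.subtype) :
    coindForm ρ B t f f' = c * coindForm ρ B t f' f := by
  calc coindForm ρ B t f f' = ∑ x, B (f.1 (t * x)) (f'.1 (t * (t * x))) := by
        rw [coindForm_apply]
        exact (Equiv.sum_comp (Equiv.mulLeft t) fun x ↦ B (f.1 x) (f'.1 (t * x))).symm
    _ = ∑ x, c * B (f'.1 x) (f.1 (t * x)) := Finset.sum_congr rfl fun x _ ↦ by
        rw [← hc, ← coindV_apply_mul, ← mul_assoc, ← sq]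
    _ = c * coindForm ρ B t f' f := by rw [coindForm_apply, Finset.mul_sum]

variable [N.Normal]

theorem coindForm_coindSingle (hB : IsInvariantPairing ρ (conjTwist ρ t) B)
    (f : ρ.coindV N.subtype) (v : V) :
    coindForm ρ B t f (ρ.coind N.subtype t⁻¹ (coindSingle ρ v)) = Nat.card N • B (f.1 1) v := by
  rw [coindForm_apply, ← sum_ite_mem_const]
  refine Finset.sum_congr rfl fun x _ ↦ ?_
  change B (f.1 x) ((coindSingle ρ v).1 (t * x * t⁻¹)) = _
  have conj_mem : t * x * t⁻¹ ∈ N ↔ x ∈ N := by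
    rw [Subgroup.Normal.mem_comm_iff ‹_›, inv_mul_cancel_left]
  split_ifs with hx
  · have apply_x : f.1 x = ρ ⟨x, hx⟩ (f.1 1) := by rw [← coindV_apply_mul, mul_one]
    rw [coindSingle_apply_of_mem v (conj_mem.2 hx), apply_x]
    exact hB ⟨x, hx⟩ (f.1 1) v
  · rw [coindSingle_apply_of_notMem v (conj_mem.not.2 hx), map_zero]

theorem coindForm_injective [NeZero (Nat.card N : k)] (hB : IsInvariantPairing ρ (conjTwist ρ t) B)
    (B_inj : Function.Injective B) : Function.Injective (coindForm ρ B t) := by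
  rw [injective_iff_map_eq_zero] at B_inj ⊢
  intro f hf
  refine Subtype.ext (funext fun x ↦ B_inj _ (LinearMap.ext fun v ↦ ?_))
  have h : Nat.card N • B ((ρ.coind N.subtype x f).1 1) v = 0 := by
    rw [← coindForm_coindSingle hB, ← isInvariantPairing_coindForm x⁻¹,
      Representation.inv_self_apply, hf, LinearMap.zero_apply]
  rw [← Nat.cast_smul_eq_nsmul k, smul_eq_zero_iff_right (NeZero.ne _)] at h
  change B (f.1 (1 * x)) v = 0 at h
  rwa [one_mul] at h

end CoinductionForm

theorem neZero_card_subgroup (k : Type*) {G : Type*} [DivisionRing k] [Group G]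
    [NeZero (Nat.card G : k)] (N : Subgroup G) : NeZero (Nat.card N : k) :=
  ⟨ne_zero_of_dvd_ne_zero (NeZero.ne (Nat.card G : k)) (Nat.cast_dvd_cast N.card_subgroup_dvd_card)⟩

section TwistedPairing

universe u v w

variable {k : Type u} {G : Type v} {V : Type w} [Field k] [IsAlgClosed k] [Group G] [Finite G]
  [NeZero (Nat.card G : k)] [AddCommGroup V] [Module k V] [FiniteDimensional k V] {N : Subgroup G}
  [N.Normal] {ρ : Representation k N V} [ρ.IsIrreducible]
  {B : V →ₗ[k] V →ₗ[k] k} {t : G}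

theorem IsInvariantPairing.apply_sq_eq_of_index_le_two
    (hG : InvariantFormsSymmetric.{u, v, max v w} k G) (hinv : ∀ g : G, ∃ κ, κ * g * κ⁻¹ = g⁻¹)
    (hN : N.index ≤ 2) (ht : t ^ 2 ∈ N) (hB : IsInvariantPairing ρ (conjTwist ρ t) B) (u v : V) :
    B v (ρ ⟨t ^ 2, ht⟩ u) = B u v := by
  have := Fintype.ofFinite G
  have := neZero_card_subgroup k N
  rcases eq_or_ne B 0 with rfl | hB₀
  · rfl
  have flip_invariant :
      IsInvariantPairing ρ (conjTwist ρ t) (B.flip ∘ₗ ρ ⟨t ^ 2, ht⟩) := fun n u v ↦ by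
    have conj_sq : (⟨t ^ 2, ht⟩ * n : N) =
        MulAut.conjNormal t (MulAut.conjNormal t n) * ⟨t ^ 2, ht⟩ := by
      ext
      simp only [Subgroup.coe_mul, MulAut.conjNormal_apply, sq]
      group
    calc B (conjTwist ρ t n v) (ρ ⟨t ^ 2, ht⟩ (ρ n u))
        = B (ρ (MulAut.conjNormal t n) v)
            (conjTwist ρ t (MulAut.conjNormal t n) (ρ ⟨t ^ 2, ht⟩ u)) := by
          rw [conjTwist_apply, conjTwist_apply, ← Module.End.mul_apply, ← map_mul, conj_sq,
            map_mul, Module.End.mul_apply]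
      _ = B v (ρ ⟨t ^ 2, ht⟩ u) := hB _ v _
  obtain ⟨c, hc⟩ := hB.exists_eq_smul rfl hB₀ flip_invariant
  have apply_sq (u v : V) : B v (ρ ⟨t ^ 2, ht⟩ u) = c * B u v := LinearMap.congr_fun₂ hc u v
  have coind_comm (T T' : (ρ.coind N.subtype).IntertwiningMap (ρ.coind N.subtype)) :
      Commute T.toLinearMap T'.toLinearMap :=
    congrArg Representation.IntertwiningMap.toLinearMap (coind_intertwiningMap_commute hN T T').eq
  have := nontrivial_of_isIrreducible ρ
  have form_inj := coindForm_injective hB (hB.injective hB₀)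
  have : Nontrivial (ρ.coindV N.subtype) := coindSingle_injective.nontrivial
  rw [apply_sq, hG.eq_one_of_forall_commute (φ := MonoidHom.id G) hinv coind_comm
    isInvariantPairing_coindForm form_inj (coindForm_eq_mul_flip ht apply_sq), one_mul]

end TwistedPairing

section TraceFormula

variable {k V : Type*} [Field k] [AddCommGroup V] [Module k V]

theorem trace_eq_sum_apply_coord {ι : Type*} [Fintype ι] (b : Module.Basis ι k V)
    (F : Module.End k (V →ₗ[k] V →ₗ[k] k)) : LinearMap.trace k _ F =
      ∑ i, ∑ j, F ((LinearMap.mul k k).compl₁₂ (b.coord i) (b.coord j)) (b i) (b j) := by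
  classical
  have basis_apply (i j : ι) :
      b.linearMap b.dualBasis (j, i) = (LinearMap.mul k k).compl₁₂ (b.coord i) (b.coord j) := by
    refine LinearMap.ext_basis b b fun i' j' ↦ ?_
    rw [Module.Basis.linearMap_apply_apply]
    rcases eq_or_ne i i' with rfl | hi
    · simp
    · simp [hi]
  rw [LinearMap.trace_eq_matrix_trace k (b.linearMap b.dualBasis), Matrix.trace,
    Fintype.sum_prod_type_right]
  refine Finset.sum_congr rfl fun i _ ↦ Finset.sum_congr rfl fun j _ ↦ ?_
  rw [Matrix.diag_apply, LinearMap.toMatrix_apply, Module.Basis.linearMap_repr_apply, basis_apply]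
  exact (LinearMap.toMatrix_apply ..).trans (b.dualBasis_repr _ _)

theorem trace_eq_trace_mul_of_flip [FiniteDimensional k V] {F : Module.End k (V →ₗ[k] V →ₗ[k] k)}
    {X Y : Module.End k V} (hF : ∀ B u v, F B u v = B (X v) (Y u)) :
    LinearMap.trace k _ F = LinearMap.trace k V (X * Y) := by
  let b := Module.finBasis k V
  rw [trace_eq_sum_apply_coord b, LinearMap.trace_eq_matrix_trace k b, LinearMap.toMatrix_mul]
  simp only [hF, Matrix.trace, Matrix.diag_apply, Matrix.mul_apply, LinearMap.toMatrix_apply]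
  rfl

end TraceFormula

section TwistedIndicator

variable {k H V : Type*} [Field k] [Group H] [AddCommGroup V] [Module k V]

/-- The representation on pairings of `ρ` and `ρ'` whose invariants are the invariant pairings. -/
noncomputable def pairingRep (ρ ρ' : Representation k H V) :
    Representation k H (V →ₗ[k] V →ₗ[k] k) :=
  Representation.linHom ρ ρ'.dual

variable {ρ ρ' : Representation k H V}

theorem pairingRep_apply (h : H) (B : V →ₗ[k] V →ₗ[k] k) (u v : V) :
    pairingRep ρ ρ' h B u v = B (ρ h⁻¹ u) (ρ' h⁻¹ v) :=
  rfl

theorem mem_invariants_pairingRep_iff {B : V →ₗ[k] V →ₗ[k] k} :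
    B ∈ (pairingRep ρ ρ').invariants ↔ IsInvariantPairing ρ ρ' B :=
  ⟨fun hB h u v ↦ by
    rw [← inv_inv h, ← pairingRep_apply, hB], fun hB h ↦ LinearMap.ext₂ (hB h⁻¹)⟩

theorem sum_pairingRep_mem_invariants [Fintype H] (B : V →ₗ[k] V →ₗ[k] k) :
    (∑ h, pairingRep ρ ρ' h) B ∈ (pairingRep ρ ρ').invariants := fun g ↦ by
  rw [← Module.End.mul_apply, Finset.mul_sum]
  simp only [← map_mul]
  exact LinearMap.congr_fun (Equiv.sum_comp (Equiv.mulLeft g) (pairingRep ρ ρ')) B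

variable [IsAlgClosed k] [FiniteDimensional k V] [ρ.IsIrreducible]

theorem finrank_invariants_pairingRep_le_one :
    Module.finrank k (Representation.invariants (V := V →ₗ[k] V →ₗ[k] k) (pairingRep ρ ρ')) ≤
      1 := by
  by_cases h : ∃ B, IsInvariantPairing ρ ρ' B ∧ B ≠ 0
  · obtain ⟨B, hB, hB₀⟩ := h
    refine finrank_le_one ⟨B, mem_invariants_pairingRep_iff.2 hB⟩ fun B' ↦ ?_
    obtain ⟨c, hc⟩ := hB.exists_eq_smul rfl hB₀ (mem_invariants_pairingRep_iff.1 B'.2)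
    exact ⟨c, Subtype.ext hc.symm⟩
  · push Not at h
    have invariants_eq_bot :
        Representation.invariants (V := V →ₗ[k] V →ₗ[k] k) (pairingRep ρ ρ') = ⊥ :=
      (Submodule.eq_bot_iff _).2 fun B hB ↦ h B (mem_invariants_pairingRep_iff.1 hB)
    rw [invariants_eq_bot, finrank_bot]
    exact zero_le_one

-- The sum is `|H|` times the trace of `B ↦ (u, v) ↦ B v (A u)` on the space of invariant pairings,
-- which is the identity of a space of dimension at most one.
theorem card_inv_mul_sum_trace_eq_zero_or_one [Fintype H] [NeZero (Nat.card H : k)]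
    {A : Module.End k V} (hA : ∀ B, IsInvariantPairing ρ ρ' B → ∀ u v, B v (A u) = B u v) :
    (Nat.card H : k)⁻¹ * ∑ h, LinearMap.trace k V (ρ h * ρ' h * A) = 0 ∨
    (Nat.card H : k)⁻¹ * ∑ h, LinearMap.trace k V (ρ h * ρ' h * A) = 1 := by
  have := invertibleOfNonzero (NeZero.ne (Nat.card H : k))
  let σ := pairingRep ρ ρ'
  let χ := Representation.character (V := V →ₗ[k] V →ₗ[k] k) σ
  let F : Module.End k (V →ₗ[k] V →ₗ[k] k) := LinearMap.lcomp k _ A ∘ₗ LinearMap.lflip.toLinearMap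
  have F_mul_sum : F * ∑ h, σ h = ∑ h, σ h := LinearMap.ext fun B ↦
    LinearMap.ext₂ (hA _ (mem_invariants_pairingRep_iff.1 (sum_pairingRep_mem_invariants B)))
  have trace_F_mul (h : H) : LinearMap.trace k _ (F * σ h) =
      LinearMap.trace k V (ρ h⁻¹ * ρ' h⁻¹ * A) := by
    rw [mul_assoc]
    exact trace_eq_trace_mul_of_flip fun _ _ _ ↦ rfl
  have sum_trace : ∑ h, LinearMap.trace k V (ρ h * ρ' h * A) = ∑ h, χ h := by
    calc ∑ h, LinearMap.trace k V (ρ h * ρ' h * A)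
        = ∑ h, LinearMap.trace k V (ρ h⁻¹ * ρ' h⁻¹ * A) := (Equiv.sum_comp (Equiv.inv H) _).symm
      _ = LinearMap.trace k _ (F * ∑ h, σ h) := by
        simp only [Finset.mul_sum, map_sum, trace_F_mul]
      _ = ∑ h, χ h := by rw [F_mul_sum, map_sum]; rfl
  rw [sum_trace, Representation.card_inv_mul_sum_char_eq_finrank]
  exact (Nat.le_one_iff_eq_zero_or_eq_one.1 finrank_invariants_pairingRep_le_one).imp
    (fun h ↦ by rw [h, Nat.cast_zero]) (fun h ↦ by rw [h, Nat.cast_one])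

end TwistedIndicator

section SimpleFDRep

universe u v

variable {k : Type u} {G : Type v} [Field k] [Monoid G] {V : FDRep k G}

/-- The inclusion of a subrepresentation, as a morphism of `FDRep k G`. -/
def subrepresentationHom (W : Subrepresentation V.ρ) : FDRep.of W.toRepresentation ⟶ V :=
  ⟨FGModuleCat.ofHom W.toSubmodule.subtype, fun _ ↦ rfl⟩

instance (W : Subrepresentation V.ρ) : Mono (subrepresentationHom W) :=
  ConcreteCategory.mono_of_injective _ Subtype.val_injective

theorem isIrreducible_of_simple [Simple V] : Representation.IsIrreducible V.ρ where
  exists_pair_ne := by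
    refine ⟨⊥, ⊤, fun h ↦ id_nonzero V ?_⟩
    ext v
    exact h.symm.le (show v ∈ (⊤ : Subrepresentation V.ρ) from trivial)
  eq_bot_or_eq_top W := by
    by_cases hW : subrepresentationHom W = 0
    · have zero_apply (w : W.toSubmodule) : (w : V) = 0 :=
        congrArg (fun f : FDRep.of W.toRepresentation ⟶ V ↦ f.hom.hom.hom w) hW
      exact Or.inl (Subrepresentation.toSubmodule_injective
        ((Submodule.eq_bot_iff _).2 fun w hw ↦ zero_apply ⟨w, hw⟩))
    · have := isIso_of_mono_of_nonzero hW
      let r : V →ₗ[k] W.toSubmodule := (inv (subrepresentationHom W)).hom.hom.hom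
      have apply_r (v : V) : (r v : V) = v :=
        congrArg (fun f : V ⟶ V ↦ f.hom.hom.hom v) (IsIso.inv_hom_id (subrepresentationHom W))
      exact Or.inr (Subrepresentation.toSubmodule_injective
        (Submodule.eq_top_iff'.2 fun v ↦ apply_r v ▸ (r v).2))

end SimpleFDRep

section CosetIndicator

universe u v w

variable {k : Type u} {G : Type v} {V : Type w} [Field k] [IsAlgClosed k] [Group G] [Finite G]
  [NeZero (Nat.card G : k)] [AddCommGroup V] [Module k V] [FiniteDimensional k V] {N : Subgroup G}
  [Fintype N]

theorem card_inv_mul_sum_trace_mul_sq_eq_zero_or_one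
    (hG : InvariantFormsSymmetric.{u, v, max v w} k G) (hinv : ∀ g : G, ∃ κ, κ * g * κ⁻¹ = g⁻¹)
    (hN : N.index ≤ 2) (ρ : Representation k N V) [ρ.IsIrreducible] (t : G) :
    (Nat.card N : k)⁻¹ *
      ∑ x : N, LinearMap.trace k V (ρ ⟨(t * x) ^ 2, sq_mem_of_index_le_two hN _⟩) = 0 ∨
    (Nat.card N : k)⁻¹ *
      ∑ x : N, LinearMap.trace k V (ρ ⟨(t * x) ^ 2, sq_mem_of_index_le_two hN _⟩) = 1 := by
  have := normal_of_index_le_two hN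
  have := neZero_card_subgroup k N
  have ht := sq_mem_of_index_le_two hN t
  have trace_mul_sq (x : N) :
      LinearMap.trace k V (ρ ⟨(t * x) ^ 2, sq_mem_of_index_le_two hN _⟩) =
        LinearMap.trace k V (ρ x * conjTwist ρ t x * ρ ⟨t ^ 2, ht⟩) := by
    have mul_sq_eq : (⟨(t * x) ^ 2, sq_mem_of_index_le_two hN _⟩ : N) =
        MulAut.conjNormal t x * ⟨t ^ 2, ht⟩ * x := by
      ext
      simp only [Subgroup.coe_mul, MulAut.conjNormal_apply, sq]
      group
    rw [mul_sq_eq, map_mul ρ, LinearMap.trace_mul_comm, map_mul ρ, ← mul_assoc,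
      conjTwist_apply]
  simp only [trace_mul_sq]
  exact card_inv_mul_sum_trace_eq_zero_or_one
    fun B hB ↦ hB.apply_sq_eq_of_index_le_two hG hinv hN ht

end CosetIndicator

section NuInd

variable {G : Type*} [Group G] {H : Subgroup G}

theorem stabCoset_eq [H.Normal] (g : G) : stabCoset H g = H :=
  inf_eq_left.2 (Subgroup.Normal.map_conj_eq H g).ge

theorem nuInd_two_eq_conj [Finite G] [H.Normal] {g : G} [Fintype (stabCoset H g)]
    (hsq : ∀ x, x ^ 2 ∈ stabCoset H g) (χ : stabCoset H g → ℂ) :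
    nuInd H g 2 χ = starRingEnd ℂ
      ((Nat.card (stabCoset H g) : ℂ)⁻¹ * ∑ x : stabCoset H g, χ ⟨(g * x) ^ 2, hsq _⟩) := by
  have := Fintype.ofFinite G
  rw [map_mul, map_inv₀, map_natCast, map_sum, nuInd, finsum_eq_sum_of_fintype,
    ← Finset.sum_subtype (Finset.univ.filter (· ∈ stabCoset H g)) (by simp)
      (fun x ↦ starRingEnd ℂ (χ ⟨(g * x) ^ 2, hsq _⟩)), Finset.sum_filter]
  congr! 2 with x
  have mem_iff : x ∈ H ∧ (g * x) ^ 2 ∈ stabCoset H g ↔ x ∈ stabCoset H g := by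
    rw [stabCoset_eq, and_iff_left_iff_imp]
    exact fun _ ↦ stabCoset_eq (H := H) g ▸ hsq _
  split_ifs <;> first | rfl | tauto

end NuInd

section SymmetricGroup

variable {α : Type*}

theorem exists_conj_eq_inv (g : Equiv.Perm α) : ∃ κ : Equiv.Perm α, κ * g * κ⁻¹ = g⁻¹ := by
  rcases isEmpty_or_nonempty α with h | ⟨⟨a⟩⟩
  · exact ⟨1, Subsingleton.elim _ _⟩
  · exact (exists_conj_eq_inv_of_apply_eq g a).imp fun _ ↦ And.right

theorem index_alternatingGroup_le_two [Fintype α] [DecidableEq α] :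
    (alternatingGroup α).index ≤ 2 := by
  rcases subsingleton_or_nontrivial α with h | h
  · exact alternatingGroup.index_eq_one.trans_le one_le_two
  · exact alternatingGroup.index_eq_two.le

end SymmetricGroup

theorem stmt_14_general.{v} {G : Type v} [Group G] [Finite G]
    (hG : InvariantFormsSymmetric.{0, v, v} ℂ G) (hinv : ∀ g : G, ∃ κ, κ * g * κ⁻¹ = g⁻¹)
    {H : Subgroup G} (hH : H.index ≤ 2) (g : G) (V : FDRep ℂ (stabCoset H g)) [Simple V] :
    nuInd H g 2 V.character = 0 ∨ nuInd H g 2 V.character = 1 := by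
  have := normal_of_index_le_two hH
  have hS : (stabCoset H g).index ≤ 2 := by rwa [stabCoset_eq]
  have := normal_of_index_le_two hS
  have := Fintype.ofFinite (stabCoset H g)
  have := isIrreducible_of_simple (V := V)
  rw [nuInd_two_eq_conj (sq_mem_of_index_le_two hS)]
  exact (card_inv_mul_sum_trace_mul_sq_eq_zero_or_one hG hinv hS V.ρ g).imp
    (fun h ↦ (congrArg _ h).trans (map_zero _)) (fun h ↦ (congrArg _ h).trans (map_one _))

/-- All simple objects of `C(S_n, A_n)` have Frobenius–Schur indicator `0` or `1`: for every
`g ∈ S_n` and every irreducible complex character `χ` of `S(g) = A_n ∩ gA_ng⁻¹`,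
`ν₂(g,χ) ∈ {0,1}`. -/
theorem stmt_14 (n : ℕ) (g : Equiv.Perm (Fin n)) :
    ∀ (V : FDRep ℂ ↥(stabCoset (alternatingGroup (Fin n)) g)), Simple V →
      nuInd (alternatingGroup (Fin n)) g 2 V.character = 0 ∨
      nuInd (alternatingGroup (Fin n)) g 2 V.character = 1 := by
  exact fun V _ ↦ stmt_14_general (.perm (Fin n)) exists_conj_eq_inv
    index_alternatingGroup_le_two g V
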